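/- For any μ ≥ 1 and σ > 0, the quadratic polynomial p_{σ,μ}(t) = t² - γ^mod((4μ-1)/(2μ), 1/(2σ^{2μ})) / γ^mod((4μ-3)/(2μ), 1/(2σ^{2μ})) is orthogonal to all polynomials of degree at most 1 on [-1,1] with respect to the weight k̃_{σ,μ}; that is, ∫_{-1}^{1} p_{σ,μ}(t)(α + βt) k̃_{σ,μ}(t) dt = 0 for all real α, β. -/

import Mathlib

open MeasureTheory

/-- Lower incomplete gamma function `γ(s,z) = ∫₀^z u^(s-1) e^(-u) du`. -/
noncomputable def lowGamma (s z : ℝ) : ℝ := ∫ u in (0:ℝ)..z, u ^ (s - 1) * Real.exp (-u)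

/-- Modified lower incomplete gamma function `γ^mod(s,z) = γ(s,z)/z^s`. -/
noncomputable def gammaMod (s z : ℝ) : ℝ := lowGamma s z / z ^ s

/-- First family of densities `k̃_{σ,μ}` on `[-1,1]`. -/
noncomputable def kTilde (σ μ t : ℝ) : ℝ :=
  (μ / gammaMod ((4 * μ - 3) / (2 * μ)) (1 / (2 * σ ^ (2 * μ)))) *
    (t ^ 2) ^ (2 * μ - 2) * Real.exp (-(1 / 2) * (t ^ 2 / σ ^ 2) ^ μ)

/-- The quadratic polynomial `p_{σ,μ}`. -/
noncomputable def pPoly (σ μ t : ℝ) : ℝ :=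
  t ^ 2 - gammaMod ((4 * μ - 1) / (2 * μ)) (1 / (2 * σ ^ (2 * μ)))
            / gammaMod ((4 * μ - 3) / (2 * μ)) (1 / (2 * σ ^ (2 * μ)))

theorem gammaMod_eq_aux (s z μ : ℝ) (hz : 0 < z) (hμ : 1 ≤ μ) :
    gammaMod s z = 2 * μ * ∫ t in (0:ℝ)..1, t ^ (2 * μ * s - 1) * Real.exp (-(z * t ^ (2 * μ))) := by
  have h := intervalIntegral.integral_comp_mul_deriv_of_deriv_nonneg (a := 0) (b := 1)
    (f := fun t : ℝ => z * t ^ (2 * μ)) (f' := fun t => z * (2 * μ * t ^ (2 * μ - 1)))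
    (g := fun u => u ^ (s - 1) * Real.exp (-u))
    (Continuous.continuousOn
      (continuous_const.mul (Real.continuous_rpow_const (by linarith))))
    (by
      intro x hx
      simp only [zero_le_one, min_eq_left, max_eq_right, Set.mem_Ioo] at hx
      exact ((Real.hasDerivAt_rpow_const (Or.inl hx.1.ne')).const_mul z))
    (by
      intro x hx
      simp only [zero_le_one, min_eq_left, max_eq_right, Set.mem_Ioo] at hx
      have := hx.1
      positivity)
  simp only [Real.zero_rpow (show 2 * μ ≠ 0 by linarith), mul_zero, Real.one_rpow, mul_one] at h
  unfold gammaMod lowGamma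
  rw [← h, div_eq_iff (by positivity), mul_assoc, mul_comm _ (z ^ s), ← intervalIntegral.integral_const_mul,
    ← intervalIntegral.integral_const_mul]
  apply intervalIntegral.integral_congr_ae
  refine Filter.Eventually.of_forall fun t ht => ?_
  rw [Set.uIoc_of_le zero_le_one] at ht
  have ht0 := ht.1
  simp only [Function.comp]
  rw [Real.mul_rpow hz.le (by positivity), ← Real.rpow_mul ht0.le]
  have e1 : z ^ s = z ^ (s - 1) * z := by
    rw [← Real.rpow_add_one hz.ne']; congr 1; ring
  have e2 : t ^ (2 * μ * s - 1) = t ^ (2 * μ * (s - 1)) * t ^ (2 * μ - 1) := by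
    rw [← Real.rpow_add ht0]; congr 1; ring
  rw [e1, e2]; ring

theorem even_integral_aux (f : ℝ → ℝ) (hf : Continuous f) (he : ∀ t, f (-t) = f t) :
    ∫ t in (-1:ℝ)..1, f t = 2 * ∫ t in (0:ℝ)..1, f t := by
  rw [← intervalIntegral.integral_add_adjacent_intervals (b := 0)
    (hf.intervalIntegrable _ _) (hf.intervalIntegrable _ _)]
  have := intervalIntegral.integral_comp_neg (a := 0) (b := 1) f
  simp only [he, neg_zero] at this
  rw [← this]; ring

theorem odd_integral_aux (f : ℝ → ℝ) (ho : ∀ t, f (-t) = -f t) :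
    ∫ t in (-1:ℝ)..1, f t = 0 := by
  have := intervalIntegral.integral_comp_neg (a := -1) (b := 1) f
  simp only [ho, neg_neg, intervalIntegral.integral_neg] at this
  linarith

/-- `p_{σ,μ}` is orthogonal to all polynomials of degree at most one on `[-1,1]`
with respect to the weight `k̃_{σ,μ}`. -/
theorem pPoly_orthogonal_to_linear (σ μ : ℝ) (hσ : 0 < σ) (hμ : 1 ≤ μ) :
    ∀ α β : ℝ,
      ∫ t in (-1:ℝ)..1, pPoly σ μ t * (α + β * t) * kTilde σ μ t = 0 := by
  intro α β
  have hμ0 : 0 < μ := by linarith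
  have hz : 0 < 1 / (2 * σ ^ (2 * μ)) := by positivity
  set W : ℝ → ℝ := fun t => (t ^ 2) ^ (2 * μ - 2) * Real.exp (-(1 / 2) * (t ^ 2 / σ ^ 2) ^ μ) with hW
  have hWc : Continuous W := by
    have h1 : Continuous fun t : ℝ => (t ^ 2) ^ (2 * μ - 2) :=
      (Real.continuous_rpow_const (by linarith)).comp (continuous_pow 2)
    have h2 : Continuous fun t : ℝ => (t ^ 2 / σ ^ 2) ^ μ :=
      (Real.continuous_rpow_const (by linarith)).comp ((continuous_pow 2).div_const _)
    exact h1.mul (Real.continuous_exp.comp (continuous_const.mul h2))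
  have hWe : ∀ t, W (-t) = W t := by intro t; simp [hW]
  have hWt : ∀ t, 0 < t → W t = t ^ (4 * μ - 4) *
      Real.exp (-(1 / (2 * σ ^ (2 * μ)) * t ^ (2 * μ))) := by
    intro t ht
    simp only [hW]
    rw [← Real.rpow_natCast t 2, ← Real.rpow_natCast σ 2,
      Real.div_rpow (by positivity) (by positivity), ← Real.rpow_mul ht.le, ← Real.rpow_mul ht.le,
      ← Real.rpow_mul hσ.le]
    push_cast
    congr 1
    · congr 1; ring
    · congr 1; field_simp
  have g0 : gammaMod ((4 * μ - 3) / (2 * μ)) (1 / (2 * σ ^ (2 * μ))) =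
      μ * ∫ t in (-1:ℝ)..1, W t := by
    rw [gammaMod_eq_aux _ _ μ hz hμ, even_integral_aux W hWc hWe,
      show ∀ x : ℝ, μ * (2 * x) = 2 * μ * x from fun x => by ring]
    congr 1
    apply intervalIntegral.integral_congr_ae
    refine Filter.Eventually.of_forall fun t ht => ?_
    rw [Set.uIoc_of_le zero_le_one] at ht
    rw [hWt t ht.1]
    congr 2
    · field_simp; ring
  have g1 : gammaMod ((4 * μ - 1) / (2 * μ)) (1 / (2 * σ ^ (2 * μ))) =
      μ * ∫ t in (-1:ℝ)..1, t ^ 2 * W t := by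
    rw [gammaMod_eq_aux _ _ μ hz hμ, even_integral_aux (fun t => t ^ 2 * W t)
      ((continuous_pow 2).mul hWc) (by intro t; simp [hWe]),
      show ∀ x : ℝ, μ * (2 * x) = 2 * μ * x from fun x => by ring]
    congr 1
    apply intervalIntegral.integral_congr_ae
    refine Filter.Eventually.of_forall fun t ht => ?_
    rw [Set.uIoc_of_le zero_le_one] at ht
    rw [hWt t ht.1, ← mul_assoc, ← Real.rpow_natCast t 2, ← Real.rpow_add ht.1]
    congr 2
    · push_cast; field_simp; ring
  set G0 := gammaMod ((4 * μ - 3) / (2 * μ)) (1 / (2 * σ ^ (2 * μ))) with hG0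
  set G1 := gammaMod ((4 * μ - 1) / (2 * μ)) (1 / (2 * σ ^ (2 * μ))) with hG1
  have hfun : ∀ t, pPoly σ μ t * (α + β * t) * kTilde σ μ t =
      (μ / G0 * α) * (t ^ 2 * W t) - (μ / G0 * α * (G1 / G0)) * W t
        + (μ / G0 * β) * ((t ^ 2 - G1 / G0) * t * W t) := by
    intro t
    simp only [pPoly, kTilde, hW, ← hG0, ← hG1]
    ring
  simp only [hfun]
  have c2 : Continuous fun t : ℝ => t ^ 2 * W t := (continuous_pow 2).mul hWc
  have c3 : Continuous fun t : ℝ => (t ^ 2 - G1 / G0) * t * W t := by fun_prop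
  rw [intervalIntegral.integral_add
      (Continuous.intervalIntegrable (by fun_prop) _ _)
      (Continuous.intervalIntegrable (by fun_prop) _ _),
    intervalIntegral.integral_sub ((c2.const_mul _).intervalIntegrable _ _)
      ((hWc.const_mul _).intervalIntegrable _ _),
    intervalIntegral.integral_const_mul, intervalIntegral.integral_const_mul,
    intervalIntegral.integral_const_mul,
    odd_integral_aux (fun t => (t ^ 2 - G1 / G0) * t * W t) (by intro t; simp [hWe])]
  by_cases h0 : G0 = 0
  · simp [h0]
  · have i0 : ∫ t in (-1:ℝ)..1, W t = G0 / μ := by rw [g0]; field_simp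
    have i1 : ∫ t in (-1:ℝ)..1, t ^ 2 * W t = G1 / μ := by rw [g1]; field_simp
    rw [i0, i1]
    field_simp
    ring
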